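/- Let m ≥ 1, 0 < σ < 1, 1 ≤ p < ∞ and 0 < λ < 1, and let Q ⊂ ℝ^m be a rectangle (a product of m bounded intervals with nonempty interior); λQ denotes the rectangle with the same center as Q and side-lengths multiplied by λ. Then there is a constant C > 0, depending only on m, σ, p, λ and the ratio between the largest and the smallest side-length of Q, such that for every set Ω ⊂ ℝ^m with Q \ λQ ⊂ Ω and every measurable u : Ω → ℝ, |u|_{W^{σ,p}(Ω)} ≤ C ( |u|_{W^{σ,p}(Ω ∩ Q)} + |u|_{W^{σ,p}(Ω \ λQ)} ). -/

import Mathlib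

open MeasureTheory Set Metric
open scoped ENNReal
noncomputable section

/-- `ℝ^m` with the Euclidean norm. -/
abbrev Eucl (n : ℕ) : Type := EuclideanSpace ℝ (Fin n)

/-- The `p`-th power of the Gagliardo seminorm. -/
noncomputable def gagliardoPow (m : ℕ) (σ p : ℝ) (A : Set (Eucl m)) (u : Eucl m → ℝ) : ℝ≥0∞ :=
  ∫⁻ x in A, ∫⁻ y in A, (‖u x - u y‖₊ : ℝ≥0∞) ^ p / (‖x - y‖₊ : ℝ≥0∞) ^ ((m : ℝ) + σ * p)

/-- The Gagliardo seminorm `|u|_{W^{σ,p}(A)}`. -/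
noncomputable def gagliardoSeminorm (m : ℕ) (σ p : ℝ) (A : Set (Eucl m)) (u : Eucl m → ℝ) :
    ℝ≥0∞ :=
  gagliardoPow m σ p A u ^ (1 / p)

/-- The rectangle of center `c` and half side-lengths `t * r i`. -/
def rectangle (m : ℕ) (c : Eucl m) (r : Fin m → ℝ) (t : ℝ) : Set (Eucl m) :=
  {x : Eucl m | ∀ i, |x i - c i| < t * r i}

/-- Averaging over the intermediate layer `Q \ A`. -/
lemma core_average {E : Type*} [MeasurableSpace E] (ν : Measure E) [SFinite ν]
    (G H : E → E → ℝ≥0∞) (hG : Measurable (Function.uncurry G))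
    (hH : Measurable (Function.uncurry H)) (A Q : Set E) (hA : MeasurableSet A)
    (hQ : MeasurableSet Q) (hAQ : A ⊆ Q) (hsym : ∀ x y, G x y = G y x) (M T N : ℝ≥0∞)
    (hpt : ∀ x ∈ A, ∀ y ∈ Qᶜ, ∀ z ∈ Q \ A, G x y ≤ G x z * H x y + M * G z y)
    (hT : ∀ x ∈ A, ∫⁻ y in Qᶜ, H x y ∂ν ≤ T) (hN : ν A ≤ N) :
    ν (Q \ A) * ∫⁻ x in A, ∫⁻ y in Qᶜ, G x y ∂ν ∂ν ≤
      T * (∫⁻ x in Q, ∫⁻ y in Q, G x y ∂ν ∂ν)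
        + M * N * (∫⁻ x in Aᶜ, ∫⁻ y in Aᶜ, G x y ∂ν ∂ν) := by
  have hS : MeasurableSet (Q \ A) := hQ.diff hA
  have hGx : ∀ x, Measurable (fun y => G x y) := fun x => hG.comp measurable_prodMk_left
  have hGy : ∀ y, Measurable (fun x => G x y) := fun x => hG.comp measurable_prodMk_right
  have hHx : ∀ x, Measurable (fun y => H x y) := fun x => hH.comp measurable_prodMk_left
  have hI : ∀ s : Set E, Measurable (fun x => ∫⁻ y in s, G x y ∂ν) := fun s =>
    hG.lintegral_prod_right'
  have hI2 : ∀ s : Set E, Measurable (fun y => ∫⁻ z in s, G z y ∂ν) := fun s =>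
    hG.lintegral_prod_left'
  set P2 := ∫⁻ y in Qᶜ, ∫⁻ z in Q \ A, G z y ∂ν ∂ν with hP2
  have h1 : ∀ x ∈ A, ν (Q \ A) * ∫⁻ y in Qᶜ, G x y ∂ν ≤
      T * (∫⁻ z in Q \ A, G x z ∂ν) + M * P2 := by
    intro x hx
    rw [← lintegral_const_mul _ (hGx x)]
    calc ∫⁻ y in Qᶜ, ν (Q \ A) * G x y ∂ν
        ≤ ∫⁻ y in Qᶜ, ((∫⁻ z in Q \ A, G x z ∂ν) * H x y + M * ∫⁻ z in Q \ A, G z y ∂ν) ∂ν := by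
          refine setLIntegral_mono' hQ.compl fun y hy => ?_
          rw [mul_comm, ← setLIntegral_const, ← lintegral_mul_const _ (hGx x),
            ← lintegral_const_mul _ (hGy y), ← lintegral_add_left ((hGx x).mul_const _)]
          exact setLIntegral_mono' hS fun z hz => hpt x hx y hy z hz
      _ = (∫⁻ z in Q \ A, G x z ∂ν) * (∫⁻ y in Qᶜ, H x y ∂ν) + M * P2 := by
          rw [lintegral_add_left ((hHx x).const_mul _), lintegral_const_mul _ (hHx x),
            lintegral_const_mul _ (hI2 _)]
      _ ≤ _ := by
          rw [mul_comm]
          gcongr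
          exact hT x hx
  calc ν (Q \ A) * ∫⁻ x in A, ∫⁻ y in Qᶜ, G x y ∂ν ∂ν
      = ∫⁻ x in A, ν (Q \ A) * ∫⁻ y in Qᶜ, G x y ∂ν ∂ν := (lintegral_const_mul _ (hI _)).symm
    _ ≤ ∫⁻ x in A, (T * (∫⁻ z in Q \ A, G x z ∂ν) + M * P2) ∂ν := setLIntegral_mono' hA h1
    _ = T * (∫⁻ x in A, ∫⁻ z in Q \ A, G x z ∂ν ∂ν) + M * P2 * ν A := by
        rw [lintegral_add_right _ measurable_const, lintegral_const_mul _ (hI _),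
          setLIntegral_const]
    _ ≤ T * (∫⁻ x in Q, ∫⁻ y in Q, G x y ∂ν ∂ν) + M * N * P2 := by
        have : M * P2 * ν A ≤ M * N * P2 := by
          rw [mul_right_comm]; gcongr
        refine add_le_add ?_ this
        refine mul_le_mul_right ?_ T
        refine (lintegral_mono_set hAQ).trans (lintegral_mono fun x => lintegral_mono_set sdiff_subset)
    _ ≤ _ := by
        gcongr
        rw [hP2]
        refine (lintegral_mono_set (compl_subset_compl.2 hAQ)).trans (lintegral_mono fun x => ?_)
        simp_rw [hsym _ x]
        exact lintegral_mono_set fun z hz => hz.2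

/-- Splitting of a double integral. -/
lemma core_split {E : Type*} [MeasurableSpace E] (ν : Measure E) [SFinite ν]
    (G : E → E → ℝ≥0∞) (hG : Measurable (Function.uncurry G)) (A Q : Set E) (hAQ : A ⊆ Q)
    (hsym : ∀ x y, G x y = G y x) :
    ∫⁻ x, ∫⁻ y, G x y ∂ν ∂ν ≤
      (∫⁻ x in Q, ∫⁻ y in Q, G x y ∂ν ∂ν) + (∫⁻ x in Aᶜ, ∫⁻ y in Aᶜ, G x y ∂ν ∂ν)
        + 2 * (∫⁻ x in A, ∫⁻ y in Qᶜ, G x y ∂ν ∂ν) := by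
  have key : ∀ s t : Set E, ∫⁻ x in s, ∫⁻ y in t, G x y ∂ν ∂ν
      = ∫⁻ z in s ×ˢ t, Function.uncurry G z ∂(ν.prod ν) := by
    intro s t
    rw [← Measure.prod_restrict, lintegral_prod _ hG.aemeasurable]
    rfl
  have hsw : ∫⁻ x in Qᶜ, ∫⁻ y in A, G x y ∂ν ∂ν = ∫⁻ x in A, ∫⁻ y in Qᶜ, G x y ∂ν ∂ν := by
    rw [lintegral_lintegral_swap hG.aemeasurable]
    simp_rw [fun x y => hsym x y]
  have h0 : ∫⁻ x, ∫⁻ y, G x y ∂ν ∂ν = ∫⁻ z, Function.uncurry G z ∂(ν.prod ν) := by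
    rw [lintegral_prod _ hG.aemeasurable]; rfl
  rw [two_mul]
  nth_rewrite 2 [← hsw]
  rw [h0, key, key, key, key, ← setLIntegral_univ]
  have hsub : (univ : Set (E × E)) ⊆ (Q ×ˢ Q ∪ Aᶜ ×ˢ Aᶜ) ∪ (A ×ˢ Qᶜ ∪ Qᶜ ×ˢ A) := by
    rintro ⟨x, y⟩ -
    simp only [mem_union, mem_prod, mem_compl_iff]
    have hx := @hAQ x
    have hy := @hAQ y
    tauto
  refine (lintegral_mono_set hsub).trans ((lintegral_union_le _ _ _).trans ?_)
  gcongr <;> exact lintegral_union_le _ _ _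

lemma tail_bound (m : ℕ) (D : ℝ) (hD : 0 ≤ D) (d : ℝ) (hd : 0 < d) (x : Eucl m) (B : Set (Eucl m))
    (hB : MeasurableSet B) (hxB : ∀ y ∈ B, d ≤ ‖x - y‖) :
    ∫⁻ y in B, ((‖x - y‖₊ : ℝ≥0∞) ^ D)⁻¹ ≤
      ENNReal.ofReal (2 / d) ^ D * (ENNReal.ofReal d ^ m *
        ∫⁻ w : Eucl m, ENNReal.ofReal ((1 + ‖w‖) ^ (-D))) := by
  have hmeas : Measurable fun w : Eucl m => ENNReal.ofReal ((1 + ‖w‖) ^ (-D)) := by fun_prop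
  have hmeas2 : Measurable fun w : Eucl m => ENNReal.ofReal ((1 + ‖d⁻¹ • w‖) ^ (-D)) := by fun_prop
  have hscale : ∫⁻ w : Eucl m, ENNReal.ofReal ((1 + ‖d⁻¹ • w‖) ^ (-D)) =
      ENNReal.ofReal d ^ m * ∫⁻ w : Eucl m, ENNReal.ofReal ((1 + ‖w‖) ^ (-D)) := by
    have h := lintegral_map (μ := (volume : Measure (Eucl m))) hmeas
      (measurable_const_smul (d⁻¹ : ℝ))
    rw [← h, Measure.map_addHaar_smul _ (inv_ne_zero hd.ne'), lintegral_smul_measure]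
    rw [smul_eq_mul]
    congr 1
    rw [finrank_euclideanSpace_fin, inv_pow, inv_inv, abs_of_pos (by positivity),
      ENNReal.ofReal_pow hd.le]
  calc ∫⁻ y in B, ((‖x - y‖₊ : ℝ≥0∞) ^ D)⁻¹
      ≤ ∫⁻ y in B, ENNReal.ofReal (2 / d) ^ D * ENNReal.ofReal ((1 + ‖d⁻¹ • (x - y)‖) ^ (-D)) := by
        refine setLIntegral_mono' hB fun y hy => ?_
        have hn := hxB y hy
        have hpos : 0 < ‖x - y‖ := hd.trans_le hn
        have e1 : (‖x - y‖₊ : ℝ≥0∞) = ENNReal.ofReal ‖x - y‖ := (ofReal_norm _).symm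
        rw [e1, ENNReal.ofReal_rpow_of_pos hpos, ENNReal.ofReal_rpow_of_pos (by positivity),
          ← ENNReal.ofReal_inv_of_pos (by positivity), ← ENNReal.ofReal_mul (by positivity)]
        apply ENNReal.ofReal_le_ofReal
        rw [norm_smul, norm_inv, Real.norm_of_nonneg hd.le, Real.rpow_neg (by positivity),
          ← div_eq_mul_inv, ← Real.div_rpow (by positivity) (by positivity),
          ← Real.inv_rpow (by positivity)]
        apply Real.rpow_le_rpow (by positivity) _ hD
        rw [inv_le_iff_one_le_mul₀ hpos, div_mul_eq_mul_div, le_div_iff₀ (by positivity)]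
        field_simp
        linarith
    _ ≤ ∫⁻ y, ENNReal.ofReal (2 / d) ^ D * ENNReal.ofReal ((1 + ‖d⁻¹ • (x - y)‖) ^ (-D)) :=
        setLIntegral_le_lintegral _ _
    _ = _ := by
        rw [lintegral_sub_left_eq_self
          (fun w : Eucl m => ENNReal.ofReal (2 / d) ^ D * ENNReal.ofReal ((1 + ‖d⁻¹ • w‖) ^ (-D))) x,
          lintegral_const_mul _ hmeas2, hscale]

lemma rectangle_eq (m : ℕ) (c : Eucl m) (r : Fin m → ℝ) (t : ℝ) :
    rectangle m c r t = (WithLp.ofLp : Eucl m → (Fin m → ℝ)) ⁻¹'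
      (univ.pi fun i => Ioo (c i - t * r i) (c i + t * r i)) := by
  ext x
  simp only [rectangle, mem_ofPred_eq, mem_preimage, mem_univ_pi, mem_Ioo, abs_lt]
  refine forall_congr' fun i => ?_
  constructor <;> rintro ⟨h1, h2⟩ <;> constructor <;> linarith

lemma rectangle_meas (m : ℕ) (c : Eucl m) (r : Fin m → ℝ) (t : ℝ) :
    MeasurableSet (rectangle m c r t) := by
  rw [rectangle_eq]
  exact (PiLp.volume_preserving_ofLp (Fin m)).measurable
    (MeasurableSet.univ_pi fun i => measurableSet_Ioo)

lemma rectangle_volume (m : ℕ) (c : Eucl m) (r : Fin m → ℝ) (hr : ∀ i, 0 < r i) (t : ℝ)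
    (ht : 0 ≤ t) :
    volume (rectangle m c r t) = ENNReal.ofReal (t ^ m * ∏ i, 2 * r i) := by
  rw [rectangle_eq, (PiLp.volume_preserving_ofLp (Fin m)).measure_preimage
    (MeasurableSet.univ_pi fun i => measurableSet_Ioo).nullMeasurableSet, Real.volume_pi_Ioo,
    ← ENNReal.ofReal_prod_of_nonneg]
  · congr 1
    have : ∀ i, c i + t * r i - (c i - t * r i) = t * (2 * r i) := fun i => by ring
    simp_rw [this, Finset.prod_mul_distrib]
    simp
  · intro i _
    have := mul_nonneg ht (hr i).le
    linarith

lemma pointwise_bound (p D : ℝ) (hp : 1 ≤ p) (hD : 0 ≤ D) (m : ℕ) (u : Eucl m → ℝ)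
    (x y z : Eucl m) (d L : ℝ) (hd : 0 < d) (hL : 0 ≤ L) (hxy : d ≤ ‖x - y‖)
    (hxz : ‖x - z‖ ≤ L * d) (hne : x ≠ z) (hne' : z ≠ y) :
    (‖u x - u y‖₊ : ℝ≥0∞) ^ p / (‖x - y‖₊ : ℝ≥0∞) ^ D ≤
      ((‖u x - u z‖₊ : ℝ≥0∞) ^ p / (‖x - z‖₊ : ℝ≥0∞) ^ D) *
        (2 ^ (p - 1) * ENNReal.ofReal (L * d) ^ D * ((‖x - y‖₊ : ℝ≥0∞) ^ D)⁻¹) +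
      (2 ^ (p - 1) * ENNReal.ofReal (1 + L) ^ D) *
        ((‖u z - u y‖₊ : ℝ≥0∞) ^ p / (‖z - y‖₊ : ℝ≥0∞) ^ D) := by
  have e1 : ∀ v : Eucl m, (‖v‖₊ : ℝ≥0∞) = ENNReal.ofReal ‖v‖ := fun v =>
    (ofReal_norm _).symm
  have hk : ∀ v : Eucl m, v ≠ 0 → (‖v‖₊ : ℝ≥0∞) ^ D ≠ 0 ∧ (‖v‖₊ : ℝ≥0∞) ^ D ≠ ⊤ := by
    intro v hv
    have hv0 : (‖v‖₊ : ℝ≥0∞) ≠ 0 := by simpa using hv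
    exact ⟨(ENNReal.rpow_pos (pos_iff_ne_zero.2 hv0) ENNReal.coe_ne_top).ne',
      ENNReal.rpow_ne_top_of_nonneg hD ENNReal.coe_ne_top⟩
  obtain ⟨a0, a1⟩ := hk (x - z) (sub_ne_zero.2 hne)
  obtain ⟨b0, b1⟩ := hk (z - y) (sub_ne_zero.2 hne')
  have hxy0 : x - y ≠ 0 := norm_pos_iff.1 (hd.trans_le hxy)
  obtain ⟨c0, c1⟩ := hk (x - y) hxy0
  have htri : (‖u x - u y‖₊ : ℝ≥0∞) ≤ ‖u x - u z‖₊ + ‖u z - u y‖₊ := by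
    have : u x - u y = (u x - u z) + (u z - u y) := by ring
    rw [this]
    exact_mod_cast nnnorm_add_le _ _
  have h2 : (‖u x - u y‖₊ : ℝ≥0∞) ^ p ≤
      2 ^ (p - 1) * ((‖u x - u z‖₊ : ℝ≥0∞) ^ p + (‖u z - u y‖₊ : ℝ≥0∞) ^ p) :=
    (ENNReal.rpow_le_rpow htri (by linarith)).trans (ENNReal.rpow_add_le_mul_rpow_add_rpow _ _ hp)
  have hA : (‖x - z‖₊ : ℝ≥0∞) ^ D ≤ ENNReal.ofReal (L * d) ^ D := by
    rw [e1]; exact ENNReal.rpow_le_rpow (ENNReal.ofReal_le_ofReal hxz) hD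
  have hB : (‖z - y‖₊ : ℝ≥0∞) ^ D ≤ ENNReal.ofReal (1 + L) ^ D * (‖x - y‖₊ : ℝ≥0∞) ^ D := by
    rw [← ENNReal.mul_rpow_of_nonneg _ _ hD, e1, e1, ← ENNReal.ofReal_mul (by linarith)]
    refine ENNReal.rpow_le_rpow (ENNReal.ofReal_le_ofReal ?_) hD
    have h3 : ‖z - y‖ ≤ ‖x - z‖ + ‖x - y‖ := by
      have : z - y = (x - y) - (x - z) := by abel
      rw [this, add_comm]
      exact norm_sub_le _ _
    nlinarith
  generalize (‖u x - u y‖₊ : ℝ≥0∞) ^ p = Fxy at *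
  generalize (‖u x - u z‖₊ : ℝ≥0∞) ^ p = Fxz at *
  generalize (‖u z - u y‖₊ : ℝ≥0∞) ^ p = Fzy at *
  generalize (‖x - y‖₊ : ℝ≥0∞) ^ D = kxy at *
  generalize (‖x - z‖₊ : ℝ≥0∞) ^ D = kxz at *
  generalize (‖z - y‖₊ : ℝ≥0∞) ^ D = kzy at *
  generalize (ENNReal.ofReal (L * d) ^ D) = a at *
  generalize (ENNReal.ofReal (1 + L) ^ D) = b at *
  generalize (2 : ℝ≥0∞) ^ (p - 1) = q at *
  have t1 : Fxz ≤ Fxz / kxz * a := by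
    calc Fxz = Fxz / kxz * kxz := (ENNReal.div_mul_cancel a0 a1).symm
      _ ≤ _ := by gcongr
  have t2 : Fzy / kxy ≤ b * (Fzy / kzy) := by
    rw [ENNReal.div_le_iff c0 c1]
    calc Fzy = Fzy / kzy * kzy := (ENNReal.div_mul_cancel b0 b1).symm
      _ ≤ Fzy / kzy * (b * kxy) := by gcongr
      _ = _ := by ring
  calc Fxy / kxy ≤ q * (Fxz + Fzy) / kxy := by gcongr
    _ = q * (Fxz * kxy⁻¹) + q * (Fzy / kxy) := by
      rw [div_eq_mul_inv, div_eq_mul_inv]; ring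
    _ ≤ q * ((Fxz / kxz * a) * kxy⁻¹) + q * (b * (Fzy / kzy)) := by gcongr
    _ = _ := by ring

/-- **Finite almost-additivity of the Gagliardo seminorm.**
Let `m ≥ 1`, `0 < σ < 1`, `1 ≤ p < ∞`, `0 < λ < 1`. For every bound `R ≥ 1` on the ratio
between the largest and the smallest side of a rectangle `Q`, there is `C > 0` depending only
on `m, σ, p, λ` and `R` such that for every rectangle `Q` with side ratios at most `R`, every
`Ω ⊇ Q \ λQ` and every measurable `u : Ω → ℝ`,
`|u|_{W^{σ,p}(Ω)} ≤ C (|u|_{W^{σ,p}(Ω ∩ Q)} + |u|_{W^{σ,p}(Ω \ λQ)})`. -/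
theorem gagliardo_finite_almost_additivity
    (m : ℕ) (hm : 1 ≤ m) (σ p lam : ℝ) (hσ0 : 0 < σ) (hσ1 : σ < 1) (hp : 1 ≤ p)
    (hlam0 : 0 < lam) (hlam1 : lam < 1) (R : ℝ) (hR : 1 ≤ R) :
    ∃ C : ℝ, 0 < C ∧
      ∀ (c : Eucl m) (r : Fin m → ℝ), (∀ i, 0 < r i) → (∀ i j, r i ≤ R * r j) →
        ∀ Ω : Set (Eucl m), rectangle m c r 1 \ rectangle m c r lam ⊆ Ω →
          ∀ u : Eucl m → ℝ, Measurable u →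
            gagliardoSeminorm m σ p Ω u ≤ ENNReal.ofReal C *
              (gagliardoSeminorm m σ p (Ω ∩ rectangle m c r 1) u
                + gagliardoSeminorm m σ p (Ω \ rectangle m c r lam) u) := by
  set D : ℝ := (m : ℝ) + σ * p with hDdef
  have hσp : 0 < σ * p := mul_pos hσ0 (by linarith)
  have hm0 : (0 : ℝ) ≤ m := Nat.cast_nonneg m
  have hD : 0 ≤ D := by linarith
  set K : ℝ≥0∞ := ∫⁻ w : Eucl m, ENNReal.ofReal ((1 + ‖w‖) ^ (-D)) with hK
  have hKfin : K < ⊤ := by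
    apply finite_integral_one_add_norm
    rw [finrank_euclideanSpace_fin]; linarith
  have hl : 0 < 1 - lam := by linarith
  set L : ℝ := 2 * m * R ^ 2 / (1 - lam) with hLdef
  have hL : 0 ≤ L := by positivity
  have hlm : lam ^ m < 1 := pow_lt_one₀ hlam0.le hlam1 (by omega)
  set κ : ℝ≥0∞ := (ENNReal.ofReal (1 - lam ^ m))⁻¹ with hκ
  have hκ0 : ENNReal.ofReal (1 - lam ^ m) ≠ 0 := by
    rw [Ne, ENNReal.ofReal_eq_zero]; linarith
  have hκfin : κ ≠ ⊤ := ENNReal.inv_ne_top.2 hκ0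
  set a : ℝ≥0∞ := 2 ^ (p - 1) * (ENNReal.ofReal (2 * L) ^ D * K) with ha
  set b : ℝ≥0∞ := 2 ^ (p - 1) * ENNReal.ofReal (1 + L) ^ D with hb
  have h2fin : (2 : ℝ≥0∞) ^ (p - 1) ≠ ⊤ :=
    ENNReal.rpow_ne_top_of_nonneg (by linarith) (by simp)
  have hofD : ∀ t : ℝ, ENNReal.ofReal t ^ D ≠ ⊤ := fun t =>
    ENNReal.rpow_ne_top_of_nonneg hD ENNReal.ofReal_ne_top
  have hafin : a ≠ ⊤ := ENNReal.mul_ne_top h2fin (ENNReal.mul_ne_top (hofD _) hKfin.ne)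
  have hbfin : b ≠ ⊤ := ENNReal.mul_ne_top h2fin (hofD _)
  set C1 : ℝ≥0∞ := 1 + 2 * (κ * (a + b)) with hC1
  have hC1fin : C1 ≠ ⊤ := ENNReal.add_ne_top.2 ⟨by simp, ENNReal.mul_ne_top (by simp)
    (ENNReal.mul_ne_top hκfin (ENNReal.add_ne_top.2 ⟨hafin, hbfin⟩))⟩
  have hpinv : 0 ≤ 1 / p := by positivity
  have hpinv1 : 1 / p ≤ 1 := by rw [div_le_one (by linarith)]; exact hp
  have hC1pfin : C1 ^ (1 / p) ≠ ⊤ := ENNReal.rpow_ne_top_of_nonneg hpinv hC1fin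
  refine ⟨(C1 ^ (1 / p)).toReal + 1, by positivity, ?_⟩
  intro c r hr hrR Ω hΩ u hu
  -- it suffices to bound the powers
  suffices hmain : gagliardoPow m σ p Ω u ≤ C1 * (gagliardoPow m σ p (Ω ∩ rectangle m c r 1) u
      + gagliardoPow m σ p (Ω \ rectangle m c r lam) u) by
    unfold gagliardoSeminorm
    calc gagliardoPow m σ p Ω u ^ (1 / p)
        ≤ (C1 * (gagliardoPow m σ p (Ω ∩ rectangle m c r 1) u
          + gagliardoPow m σ p (Ω \ rectangle m c r lam) u)) ^ (1 / p) :=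
          ENNReal.rpow_le_rpow hmain hpinv
      _ = C1 ^ (1 / p) * (gagliardoPow m σ p (Ω ∩ rectangle m c r 1) u
          + gagliardoPow m σ p (Ω \ rectangle m c r lam) u) ^ (1 / p) :=
          ENNReal.mul_rpow_of_nonneg _ _ hpinv
      _ ≤ _ := by
          refine mul_le_mul' ?_ (ENNReal.rpow_add_le_add_rpow _ _ hpinv hpinv1)
          rw [← ENNReal.ofReal_toReal hC1pfin]
          exact ENNReal.ofReal_le_ofReal (by rw [ENNReal.ofReal_toReal hC1pfin]; linarith)
  set Q := rectangle m c r 1 with hQdef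
  set A := rectangle m c r lam with hAdef
  have hQm : MeasurableSet Q := rectangle_meas _ _ _ _
  have hAm : MeasurableSet A := rectangle_meas _ _ _ _
  have hAQ : A ⊆ Q := by
    intro x hx i
    have h1 := hx i
    have h2 := hr i
    nlinarith
  set i0 : Fin m := ⟨0, by omega⟩ with hi0
  set ρ : ℝ := r i0 with hρ
  have hρ0 : 0 < ρ := hr i0
  have hR0 : 0 < R := by linarith
  set d : ℝ := (1 - lam) * ρ / R with hd
  have hd0 : 0 < d := by positivity
  have hLd : L * d = m * (2 * R * ρ) := by
    rw [hLdef, hd]; field_simp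
  have hlow : ∀ i, ρ / R ≤ r i := fun i => by
    rw [div_le_iff₀ hR0, mul_comm]; exact hrR _ _
  have geom1 : ∀ x ∈ A, ∀ y ∈ Qᶜ, d ≤ ‖x - y‖ := by
    intro x hx y hy
    have hy' : ∃ i, r i ≤ |y i - c i| := by
      by_contra hcon
      push Not at hcon
      exact hy fun i => by rw [one_mul]; exact hcon i
    obtain ⟨i, hi⟩ := hy'
    have hxi : |x i - c i| < lam * r i := hx i
    have h3 : |(x - y) i| ≤ ‖x - y‖ := by
      simpa [Real.norm_eq_abs] using PiLp.norm_apply_le (x - y) i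
    have h4 : |y i - c i| ≤ |x i - c i| + |x i - y i| := by
      have : y i - c i = (x i - c i) - (x i - y i) := by ring
      rw [this]; exact abs_sub _ _
    have h5 : d ≤ (1 - lam) * r i := by
      rw [hd, mul_div_assoc]
      exact mul_le_mul_of_nonneg_left (hlow i) hl.le
    have h6 : (x - y) i = x i - y i := rfl
    rw [h6] at h3
    linarith
  have geom2 : ∀ x ∈ Q, ∀ z ∈ Q, ‖x - z‖ ≤ L * d := by
    intro x hx z hz
    have hb : 0 ≤ 2 * R * ρ := by positivity
    have hi : ∀ i, |(x - z) i| ≤ 2 * R * ρ := by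
      intro i
      have h1 : |x i - c i| < 1 * r i := hx i
      have h2 : |z i - c i| < 1 * r i := hz i
      have h3 : r i ≤ R * ρ := hrR _ _
      have h6 : (x - z) i = (x i - c i) - (z i - c i) := by
        change x i - z i = _
        ring
      rw [h6]
      have := abs_sub (x i - c i) (z i - c i)
      linarith
    rw [hLd, EuclideanSpace.norm_eq]
    apply Real.sqrt_le_iff.2 ⟨by positivity, ?_⟩
    calc ∑ i, ‖(x - z) i‖ ^ 2 ≤ ∑ i : Fin m, (2 * R * ρ) ^ 2 := by
          refine Finset.sum_le_sum fun i _ => ?_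
          rw [Real.norm_eq_abs]
          exact pow_le_pow_left₀ (abs_nonneg _) (hi i) 2
      _ = m * (2 * R * ρ) ^ 2 := by simp
      _ ≤ (m * (2 * R * ρ)) ^ 2 := by
          rw [mul_pow (m : ℝ)]
          have : (1 : ℝ) ≤ m := by exact_mod_cast hm
          have h7 : (m : ℝ) ≤ (m : ℝ) ^ 2 := le_self_pow₀ this two_ne_zero
          exact mul_le_mul_of_nonneg_right h7 (sq_nonneg _)
  -- volumes
  set W : ℝ := ∏ i, 2 * r i with hW
  have hW0 : 0 < W := Finset.prod_pos fun i _ => by have := hr i; linarith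
  set V : ℝ≥0∞ := ENNReal.ofReal W with hV
  have hV0 : V ≠ 0 := by rw [hV, Ne, ENNReal.ofReal_eq_zero]; linarith
  have hVtop : V ≠ ⊤ := ENNReal.ofReal_ne_top
  have hQvol : volume Q = V := by
    rw [hQdef, rectangle_volume m c r hr 1 zero_le_one, one_pow, one_mul]
  have hAvol : volume A = ENNReal.ofReal (lam ^ m * W) := by
    rw [hAdef, rectangle_volume m c r hr lam hlam0.le]
  have hSvol : volume (Q \ A) = ENNReal.ofReal (1 - lam ^ m) * V := by
    rw [measure_sdiff hAQ hAm.nullMeasurableSet (by rw [hAvol]; exact ENNReal.ofReal_ne_top),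
      hQvol, hAvol, hV, ← ENNReal.ofReal_sub _ (by positivity), ← ENNReal.ofReal_mul (by linarith)]
    congr 1; ring
  have hdV : ENNReal.ofReal d ^ m ≤ V := by
    rw [← ENNReal.ofReal_pow hd0.le]
    apply ENNReal.ofReal_le_ofReal
    calc d ^ m = ∏ i : Fin m, d := by simp
      _ ≤ W := by
        refine Finset.prod_le_prod (fun _ _ => hd0.le) fun i _ => ?_
        have h1 := hlow i
        have h2 : d ≤ ρ / R := by
          rw [hd, mul_div_assoc]
          have : 0 ≤ ρ / R := by positivity
          nlinarith
        have := hr i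
        linarith
  -- the measure
  set ν : Measure (Eucl m) := volume.restrict Ω with hν
  have hνS : ν (Q \ A) = ENNReal.ofReal (1 - lam ^ m) * V := by
    rw [hν, Measure.restrict_apply (hQm.diff hAm), inter_eq_left.2 hΩ, hSvol]
  have hνA : ν A ≤ V := by
    rw [← hQvol]
    exact (Measure.restrict_apply_le _ _).trans (measure_mono hAQ)
  set G : Eucl m → Eucl m → ℝ≥0∞ := fun x y =>
    (‖u x - u y‖₊ : ℝ≥0∞) ^ p / (‖x - y‖₊ : ℝ≥0∞) ^ D with hGdef
  set H : Eucl m → Eucl m → ℝ≥0∞ := fun x y =>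
    2 ^ (p - 1) * ENNReal.ofReal (L * d) ^ D * ((‖x - y‖₊ : ℝ≥0∞) ^ D)⁻¹ with hHdef
  have hGm : Measurable (Function.uncurry G) := by
    unfold Function.uncurry
    simp only [hGdef]
    fun_prop
  have hHm : Measurable (Function.uncurry H) := by
    unfold Function.uncurry
    simp only [hHdef]
    fun_prop
  have hsym : ∀ x y, G x y = G y x := by
    intro x y
    simp only [hGdef]
    rw [← nnnorm_neg (u x - u y), neg_sub, ← nnnorm_neg (x - y), neg_sub]
  have hpow : gagliardoPow m σ p Ω u = ∫⁻ x, ∫⁻ y, G x y ∂ν ∂ν := rfl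
  have hpow1 : gagliardoPow m σ p (Ω ∩ Q) u = ∫⁻ x in Q, ∫⁻ y in Q, G x y ∂ν ∂ν := by
    have : ν.restrict Q = volume.restrict (Ω ∩ Q) := by
      rw [hν, Measure.restrict_restrict hQm, inter_comm]
    rw [this]; rfl
  have hpow2 : gagliardoPow m σ p (Ω \ A) u = ∫⁻ x in Aᶜ, ∫⁻ y in Aᶜ, G x y ∂ν ∂ν := by
    have : ν.restrict Aᶜ = volume.restrict (Ω \ A) := by
      rw [hν, Measure.restrict_restrict hAm.compl, inter_comm, Set.sdiff_eq]
    rw [this]; rfl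
  have hT : ∀ x ∈ A, ∫⁻ y in Qᶜ, H x y ∂ν ≤ a * V := by
    intro x hx
    calc ∫⁻ y in Qᶜ, H x y ∂ν ≤ ∫⁻ y in Qᶜ, H x y := by
          apply lintegral_mono' _ le_rfl
          exact Measure.restrict_mono le_rfl Measure.restrict_le_self
      _ = 2 ^ (p - 1) * ENNReal.ofReal (L * d) ^ D *
          ∫⁻ y in Qᶜ, ((‖x - y‖₊ : ℝ≥0∞) ^ D)⁻¹ := by
          rw [← lintegral_const_mul _ (by fun_prop)]
      _ ≤ 2 ^ (p - 1) * ENNReal.ofReal (L * d) ^ D *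
          (ENNReal.ofReal (2 / d) ^ D * (ENNReal.ofReal d ^ m * K)) := by
          gcongr
          exact tail_bound m D hD d hd0 x Qᶜ hQm.compl (geom1 x hx)
      _ = 2 ^ (p - 1) * (ENNReal.ofReal (L * d) ^ D * ENNReal.ofReal (2 / d) ^ D) * K *
            ENNReal.ofReal d ^ m := by ring
      _ = a * ENNReal.ofReal d ^ m := by
          rw [← ENNReal.mul_rpow_of_nonneg _ _ hD, ← ENNReal.ofReal_mul (by positivity)]
          have : L * d * (2 / d) = 2 * L := by field_simp
          rw [this, ha]; ring
      _ ≤ a * V := by gcongr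
  have hpt : ∀ x ∈ A, ∀ y ∈ Qᶜ, ∀ z ∈ Q \ A, G x y ≤ G x z * H x y + b * G z y := by
    intro x hx y hy z hz
    exact pointwise_bound p D hp hD m u x y z d L hd0 hL (geom1 x hx y hy)
      (geom2 x (hAQ hx) z hz.1) (fun h => hz.2 (h ▸ hx)) (fun h => hy (h ▸ hz.1))
  have hcore := core_average ν G H hGm hHm A Q hAm hQm hAQ hsym b (a * V) V hpt hT hνA
  have hsplit := core_split ν G hGm A Q hAQ hsym
  rw [hpow, hpow1, hpow2]
  rw [hνS] at hcore
  generalize (∫⁻ x in A, ∫⁻ y in Qᶜ, G x y ∂ν ∂ν) = J at *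
  generalize (∫⁻ x in Q, ∫⁻ y in Q, G x y ∂ν ∂ν) = P1 at *
  generalize (∫⁻ x in Aᶜ, ∫⁻ y in Aᶜ, G x y ∂ν ∂ν) = P2 at *
  have hJ : J ≤ κ * (a * P1 + b * P2) := by
    have h1 : V * (ENNReal.ofReal (1 - lam ^ m) * J) ≤ V * (a * P1 + b * P2) := by
      calc _ = ENNReal.ofReal (1 - lam ^ m) * V * J := by ring
        _ ≤ _ := hcore
        _ = _ := by ring
    have h2 : ENNReal.ofReal (1 - lam ^ m) * J ≤ a * P1 + b * P2 :=
      (ENNReal.mul_le_mul_iff_right hV0 hVtop).1 h1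
    calc J = κ * (ENNReal.ofReal (1 - lam ^ m) * J) := by
          rw [← mul_assoc, hκ, ENNReal.inv_mul_cancel hκ0 ENNReal.ofReal_ne_top, one_mul]
      _ ≤ _ := by gcongr
  calc _ ≤ P1 + P2 + 2 * J := hsplit
    _ ≤ P1 + P2 + 2 * (κ * ((a + b) * (P1 + P2))) := by
        gcongr
        refine hJ.trans ?_
        gcongr
        calc a * P1 + b * P2 ≤ (a * P1 + b * P2) + (a * P2 + b * P1) := le_self_add
          _ = _ := by ring
    _ = C1 * (P1 + P2) := by rw [hC1]; ring
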